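/- (Laplace-functional convergence for the Gaussian free field on regular trees.) Let r ≥ 3 be an integer and for N ≥ 2 set a_N := √(2 log N) − (log log N + log(4π))/(2√(2 log N)) and b_N := 1/a_N. For each N, let T_N be a finite tree (connected acyclic simple graph) on N vertices in which every vertex has degree at most r, with graph distance d, and let Z^N = (Z_x)_{x ∈ V(T_N)} be a centered Gaussian vector with E[(Z_x)²] = 1 for every vertex x and E[Z_x Z_y] = (r−1)^{−d(x,y)} for all vertices x ≠ y. Then for every φ ∈ C^∞_⌁, E[ exp( −∑_{x ∈ V(T_N)} φ((Z_x − a_N)/b_N) ) ] → exp( −∫_ℝ (1 − e^{−φ(y)}) e^{−y} dy ) as N → ∞; i.e., the extremal point process ∑_x δ_{(Z_x − a_N)/b_N} converges to a Poisson point process on ℝ with intensity e^{−y} dy. -/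

import Mathlib

/-!
The covariance `ρ ^ dist x y`, `ρ = 1 / (r - 1)`, of the field on a tree has an entrywise
nonnegative Gram factor: explore the tree from a root, and let each new vertex `x` with parent `p`
be `Z_x = ρ Z_p + √(1 - ρ²) ξ_x` with fresh independent noise (`exists_gram_factor`). Hence the law
of the field is the image of a product of standard Gaussians under a monotone linear map
(`map_eq_of_gram`), so by Harris' inequality (`isAssociated_pi`) it is associated.

With `h = 1 - e^{-φ}`, `0 ≤ h ≤ 1`, the quantity of interest is `E ∏ Y_x`, where
`Y_x = 1 - h (a_N (Z_x - a_N))` is a decreasing function of the field. For associated variables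
`newman_inequality` bounds `|E ∏ Y_x - ∏ E Y_x|` by the sum of the pair covariances, and these are
split according to the distance, the threshold being `L ≈ log N / (8 log (r + 1))`.

* Near pairs, `dist x y ≤ L`. There are at most `(r + 1)^L ≤ N^{1/8}` of them for each `x`, and since
  the correlation is at most `1/2`, `Z_x + Z_y` has variance at most `3` and the covariance is at
  most `exp (-(2/3) (a_N - K/a_N)²) = O(N^{-5/4})` (`near_pair`). As `5/4 > 1 + 1/8`, their sum tends
  to `0`.
* Far pairs, `dist x y > L`. Writing `Z_y = ρ' Z_x + √(1 - ρ'²) ξ` with `ρ' ≤ 2^{-L}`, on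
  `Z_x < 2 a_N` the dependence on `Z_x` moves the argument of `h` by at most
  `δ = 2 a_N² 2^{-L}`, which tends to `0`. So the covariance is at most `p (q - p) + exp (-2 a_N²)`,
  where `p` is the one-point mean of `h` and `q` the one-point mean of `h (· + δ)` (`far_pair`).
  Since `N p` and `N q` have the same limit, the sum over the `N²` pairs tends to `0`.

The one-point asymptotics `N p → ∫ h(y) e^{-y} dy` come from rescaling the Gaussian integral, the
identity `N e^{-a_N²/2} ∼ a_N √(2π)`, and dominated convergence (`tendsto_intensity`). Finally
`∏ E Y_x = (1 - p)^N → exp (-∫ h(y) e^{-y} dy)`.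
-/

open Filter Real MeasureTheory ProbabilityTheory

/-- The standard Gaussian extreme-value centering sequence
`a_N = √(2 log N) − (log log N + log(4π))/(2√(2 log N))`. -/
noncomputable def aSeq (N : ℝ) : ℝ :=
  Real.sqrt (2 * Real.log N) -
    (Real.log (Real.log N) + Real.log (4 * Real.pi)) / (2 * Real.sqrt (2 * Real.log N))

/-- `X` is a centered Gaussian vector (indexed by `ι`) under `P` with covariance matrix `Λ`:
every linear functional of `X` is a centered real Gaussian with the variance prescribed
by the quadratic form of `Λ`. -/
def IsCenteredGaussianVector {Ω ι : Type*} [MeasurableSpace Ω] [Fintype ι]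
    (P : Measure Ω) (X : Ω → ι → ℝ) (Λ : ι → ι → ℝ) : Prop :=
  Measurable X ∧
    ∀ c : ι → ℝ,
      P.map (fun ω => ∑ i, c i * X ω i) =
        ProbabilityTheory.gaussianReal 0 (∑ i, ∑ j, c i * c j * Λ i j).toNNReal

/-- `φ` belongs to `C^∞_⌁`: smooth, nondecreasing, vanishing on `(−∞, −K]` and constant
on `[K, ∞)` for some `K > 0`. -/
def CZigzag (φ : ℝ → ℝ) : Prop :=
  ContDiff ℝ (⊤ : ℕ∞) φ ∧ Monotone φ ∧
    ∃ K > (0 : ℝ), (∀ x ≤ -K, φ x = 0) ∧ ∀ x ≥ K, φ x = φ K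

/-! ### Associated measures and covariance inequalities -/

/-- A measure `μ` on a preordered space is associated if any two bounded measurable monotone
functions are nonnegatively correlated under `μ`. -/
def IsAssociated {α : Type*} [MeasurableSpace α] [Preorder α] (μ : Measure α) : Prop :=
  ∀ f g : α → ℝ, Monotone f → Monotone g → Measurable f → Measurable g →
    (∃ C, ∀ x, |f x| ≤ C) → (∃ C, ∀ x, |g x| ≤ C) →
    (∫ x, f x ∂μ) * (∫ x, g x ∂μ) ≤ ∫ x, f x * g x ∂μ

lemma integrable_of_abs_le {α : Type*} [MeasurableSpace α] {μ : Measure α} [IsFiniteMeasure μ]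
    {f : α → ℝ} (hf : Measurable f) {C : ℝ} (hC : ∀ x, |f x| ≤ C) : Integrable f μ :=
  Integrable.of_bound hf.aestronglyMeasurable C (ae_of_all _ hC)

lemma abs_integral_le_of_abs_le {α : Type*} [MeasurableSpace α] {μ : Measure α}
    [IsProbabilityMeasure μ] {f : α → ℝ} {C : ℝ} (hC : ∀ x, |f x| ≤ C) :
    |∫ x, f x ∂μ| ≤ C := by
  simpa using norm_integral_le_of_norm_le_const (μ := μ) (f := f) (ae_of_all _ hC)

lemma abs_mul_le_of_abs_le {a b C D : ℝ} (ha : |a| ≤ C) (hb : |b| ≤ D) : |a * b| ≤ C * D := by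
  rw [abs_mul]
  exact mul_le_mul ha hb (abs_nonneg _) ((abs_nonneg _).trans ha)

/-- Chebyshev's association inequality: integrate `(f x - f y) * (g x - g y) ≥ 0` over two
independent copies. -/
lemma isAssociated_of_linearOrder {α : Type*} [MeasurableSpace α] [LinearOrder α]
    (μ : Measure α) [IsProbabilityMeasure μ] : IsAssociated μ := by
  rintro f g hf hg hfm hgm ⟨C, hC⟩ ⟨D, hD⟩
  have hfi : Integrable f μ := integrable_of_abs_le hfm hC
  have hgi : Integrable g μ := integrable_of_abs_le hgm hD
  have hfg : Integrable (fun x => f x * g x) μ :=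
    integrable_of_abs_le (hfm.mul hgm) fun x => abs_mul_le_of_abs_le (hC x) (hD x)
  have key : 0 ≤ ∫ x, (∫ y, (f x - f y) * (g x - g y) ∂μ) ∂μ := by
    refine integral_nonneg fun x => integral_nonneg fun y => ?_
    rcases le_total x y with h | h
    · exact mul_nonneg_of_nonpos_of_nonpos (sub_nonpos.2 (hf h)) (sub_nonpos.2 (hg h))
    · exact mul_nonneg (sub_nonneg.2 (hf h)) (sub_nonneg.2 (hg h))
  have inner : ∀ x, ∫ y, (f x - f y) * (g x - g y) ∂μ
      = f x * g x - f x * (∫ y, g y ∂μ) - (∫ y, f y ∂μ) * g x + ∫ y, f y * g y ∂μ := by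
    intro x
    have : ∀ y, (f x - f y) * (g x - g y)
        = (f x * g x - f x * g y - f y * g x) + f y * g y := fun y => by ring
    simp_rw [this]
    rw [integral_add, integral_sub, integral_sub, integral_const, integral_const_mul,
      integral_mul_const]
    · simp
    all_goals fun_prop
  simp_rw [inner] at key
  rw [integral_add, integral_sub, integral_sub, integral_const, integral_mul_const,
      integral_const_mul] at key
  · simp at key
    linarith
  all_goals fun_prop

/-- Association is stable under products: condition on the first coordinate, and note that the
conditional means are again monotone. -/
lemma IsAssociated.prod {α β : Type*} [MeasurableSpace α] [Preorder α] [MeasurableSpace β]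
    [Preorder β] {μ : Measure α} {ν : Measure β} [IsProbabilityMeasure μ] [IsProbabilityMeasure ν]
    (hμ : IsAssociated μ) (hν : IsAssociated ν) : IsAssociated (μ.prod ν) := by
  rintro f g hf hg hfm hgm ⟨C, hC⟩ ⟨D, hD⟩
  have hfi : Integrable f (μ.prod ν) := integrable_of_abs_le hfm hC
  have hgi : Integrable g (μ.prod ν) := integrable_of_abs_le hgm hD
  have hfg : Integrable (fun x => f x * g x) (μ.prod ν) :=
    integrable_of_abs_le (hfm.mul hgm) fun x => abs_mul_le_of_abs_le (hC x) (hD x)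
  have hfy : ∀ x, Measurable fun y => f (x, y) := fun x => hfm.comp measurable_prodMk_left
  have hgy : ∀ x, Measurable fun y => g (x, y) := fun x => hgm.comp measurable_prodMk_left
  have hF : Measurable fun x => ∫ y, f (x, y) ∂ν :=
    (hfm.stronglyMeasurable.integral_prod_right' (ν := ν)).measurable
  have hG : Measurable fun x => ∫ y, g (x, y) ∂ν :=
    (hgm.stronglyMeasurable.integral_prod_right' (ν := ν)).measurable
  have hFb : ∀ x, |∫ y, f (x, y) ∂ν| ≤ C := fun x => abs_integral_le_of_abs_le fun y => hC _
  have hGb : ∀ x, |∫ y, g (x, y) ∂ν| ≤ D := fun x => abs_integral_le_of_abs_le fun y => hD _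
  rw [integral_prod _ hfi, integral_prod _ hgi, integral_prod _ hfg]
  refine (hμ _ _ ?_ ?_ hF hG ⟨C, hFb⟩ ⟨D, hGb⟩).trans ?_
  · intro x x' h
    exact integral_mono (integrable_of_abs_le (hfy x) fun y => hC _)
      (integrable_of_abs_le (hfy x') fun y => hC _) fun y => hf (Prod.mk_le_mk.2 ⟨h, le_rfl⟩)
  · intro x x' h
    exact integral_mono (integrable_of_abs_le (hgy x) fun y => hD _)
      (integrable_of_abs_le (hgy x') fun y => hD _) fun y => hg (Prod.mk_le_mk.2 ⟨h, le_rfl⟩)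
  · refine integral_mono ?_ ?_ fun x => ?_
    · exact integrable_of_abs_le (hF.mul hG) fun x => abs_mul_le_of_abs_le (hFb x) (hGb x)
    · exact hfg.integral_prod_left
    · exact hν _ _ (fun y y' h => hf (Prod.mk_le_mk.2 ⟨le_rfl, h⟩))
        (fun y y' h => hg (Prod.mk_le_mk.2 ⟨le_rfl, h⟩)) (hfy x) (hgy x) ⟨C, fun y => hC _⟩
        ⟨D, fun y => hD _⟩

lemma IsAssociated.map {α β : Type*} [MeasurableSpace α] [Preorder α] [MeasurableSpace β]
    [Preorder β] {μ : Measure α} (hμ : IsAssociated μ) {T : α → β} (hT : Monotone T)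
    (hTm : Measurable T) : IsAssociated (μ.map T) := by
  rintro f g hf hg hfm hgm ⟨C, hC⟩ ⟨D, hD⟩
  rw [integral_map hTm.aemeasurable hfm.aestronglyMeasurable,
    integral_map hTm.aemeasurable hgm.aestronglyMeasurable,
    integral_map (f := fun x => f x * g x) hTm.aemeasurable
      (hfm.mul hgm).aestronglyMeasurable]
  exact hμ _ _ (hf.comp hT) (hg.comp hT) (hfm.comp hTm) (hgm.comp hTm) ⟨C, fun x => hC _⟩
    ⟨D, fun x => hD _⟩

/-- Harris' inequality for a finite power of a probability measure on `ℝ`. -/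
lemma isAssociated_pi_fin (ν : Measure ℝ) [IsProbabilityMeasure ν] (n : ℕ) :
    IsAssociated (Measure.pi fun _ : Fin n => ν) := by
  induction n with
  | zero =>
    rintro f g - - - - - -
    rw [Measure.pi_of_empty (x := fun i => i.elim0)]
    simp
  | succ n ih =>
    have h := (measurePreserving_piFinSuccAbove (fun _ : Fin (n + 1) => ν) 0).symm
    rw [← h.map_eq]
    refine ((isAssociated_of_linearOrder ν).prod ih).map ?_ (MeasurableEquiv.measurable _)
    rintro ⟨a, x⟩ ⟨b, y⟩ ⟨h1, h2⟩ i
    refine Fin.cases ?_ (fun j => ?_) i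
    · simpa [MeasurableEquiv.piFinSuccAbove] using h1
    · simpa [MeasurableEquiv.piFinSuccAbove] using h2 j

/-- Harris' inequality, indexed by an arbitrary finite type. -/
lemma isAssociated_pi {ι : Type*} [Fintype ι] (ν : Measure ℝ) [IsProbabilityMeasure ν] :
    IsAssociated (Measure.pi fun _ : ι => ν) := by
  have h := measurePreserving_piCongrLeft (fun _ : ι => ν) (Fintype.equivFin ι).symm
  rw [← h.map_eq]
  refine (isAssociated_pi_fin ν _).map ?_ (MeasurableEquiv.measurable _)
  intro x y hxy i
  obtain ⟨j, rfl⟩ := (Fintype.equivFin ι).symm.surjective i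
  simpa only [MeasurableEquiv.coe_piCongrLeft, Equiv.piCongrLeft_apply_apply] using hxy j

/-- For factors in `[0, 1]`, the sum minus the product is monotone in the factors. -/
lemma prod_sub_prod_le_sum {ι : Type*} (s : Finset ι) (u v : ι → ℝ) (hu : ∀ i, 0 ≤ u i)
    (huv : ∀ i, u i ≤ v i) (hv : ∀ i, v i ≤ 1) :
    ∏ i ∈ s, v i - ∏ i ∈ s, u i ≤ ∑ i ∈ s, (v i - u i) := by
  classical
  induction s using Finset.induction_on with
  | empty => simp
  | insert a s ha ih =>
    rw [Finset.prod_insert ha, Finset.prod_insert ha, Finset.sum_insert ha]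
    have h1 : ∏ i ∈ s, v i ≤ 1 := Finset.prod_le_one (fun i _ => (hu i).trans (huv i)) fun i _ => hv i
    have h2 : ∏ i ∈ s, u i ≤ ∏ i ∈ s, v i := Finset.prod_le_prod (fun i _ => hu i) fun i _ => huv i
    have h3 : u a ≤ 1 := (huv a).trans (hv a)
    nlinarith [hu a, huv a, hv a]

/-- Newman's inequality: for `[0, 1]`-valued decreasing functions `Y i` of an associated vector, the
mean of the product differs from the product of the means by at most the sum of the covariances.
Adding the factor `Y a` to the product `Q = ∏ i ∈ s, Y i` costs `Cov (Y a, Q)`, which is nonnegative,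
and at most `Cov (Y a, ∑ i ∈ s, Y i)` because `∑ i ∈ s, Y i - Q` is decreasing too. -/
lemma newman_inequality {α ι : Type*} [MeasurableSpace α] [Preorder α] {μ : Measure α}
    [IsProbabilityMeasure μ] (hμ : IsAssociated μ) (Y : ι → α → ℝ) (hm : ∀ i, Measurable (Y i))
    (hanti : ∀ i, Antitone (Y i)) (h0 : ∀ i x, 0 ≤ Y i x) (h1 : ∀ i x, Y i x ≤ 1)
    (B : ι → ι → ℝ)
    (hB : ∀ i j, i ≠ j → ∫ x, Y i x * Y j x ∂μ - (∫ x, Y i x ∂μ) * ∫ x, Y j x ∂μ ≤ B i j)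
    (hB0 : ∀ i j, 0 ≤ B i j) (s : Finset ι) :
    |∫ x, ∏ i ∈ s, Y i x ∂μ - ∏ i ∈ s, ∫ x, Y i x ∂μ| ≤ ∑ i ∈ s, ∑ j ∈ s, B i j := by
  classical
  have habs : ∀ i x, |Y i x| ≤ 1 := fun i x => abs_le.2 ⟨by linarith [h0 i x], h1 i x⟩
  have hint : ∀ i, Integrable (Y i) μ := fun i => integrable_of_abs_le (hm i) (habs i)
  induction s using Finset.induction_on with
  | empty => simp
  | insert a s ha ih =>
    simp_rw [Finset.prod_insert ha]
    have hP0 : ∀ x, 0 ≤ ∏ i ∈ s, Y i x := fun x => Finset.prod_nonneg fun i _ => h0 i x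
    have hP1 : ∀ x, ∏ i ∈ s, Y i x ≤ 1 := fun x =>
      Finset.prod_le_one (fun i _ => h0 i x) fun i _ => h1 i x
    have hPabs : ∀ x, |∏ i ∈ s, Y i x| ≤ 1 := fun x => abs_le.2 ⟨by linarith [hP0 x], hP1 x⟩
    have hPm : Measurable fun x => ∏ i ∈ s, Y i x := Finset.measurable_fun_prod s fun i _ => hm i
    have hPi : Integrable (fun x => ∏ i ∈ s, Y i x) μ := integrable_of_abs_le hPm hPabs
    have hSm : Measurable fun x => ∑ i ∈ s, Y i x := Finset.measurable_fun_sum s fun i _ => hm i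
    have hSabs : ∀ x, |∑ i ∈ s, Y i x| ≤ s.card := fun x =>
      (Finset.abs_sum_le_sum_abs _ _).trans (by
        simpa using Finset.sum_le_sum fun i (_ : i ∈ s) => habs i x)
    have hSi : Integrable (fun x => ∑ i ∈ s, Y i x) μ := integrable_of_abs_le hSm hSabs
    -- the products and the sums minus products of antitone functions are antitone
    have hlow := hμ (fun x => -Y a x) (fun x => -∏ i ∈ s, Y i x) (fun x y h => neg_le_neg (hanti a h))
      (fun x y h => neg_le_neg (Finset.prod_le_prod (fun i _ => h0 i _) fun i _ => hanti i h))
      (hm a).neg hPm.neg ⟨1, fun x => by simpa using habs a x⟩ ⟨1, fun x => by simpa using hPabs x⟩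
    have hup := hμ (fun x => -Y a x) (fun x => -(∑ i ∈ s, Y i x - ∏ i ∈ s, Y i x))
      (fun x y h => neg_le_neg (hanti a h))
      (fun x y h => by
        have := prod_sub_prod_le_sum s (fun i => Y i y) (fun i => Y i x) (fun i => h0 i y)
          (fun i => hanti i h) (fun i => h1 i x)
        rw [Finset.sum_sub_distrib] at this
        simp only
        linarith)
      (hm a).neg (hSm.sub hPm).neg ⟨1, fun x => by simpa using habs a x⟩
      ⟨s.card + 1, fun x => by
        rw [abs_neg]
        exact (abs_sub _ _).trans (add_le_add (hSabs x) (hPabs x))⟩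
    have hYP : Integrable (fun x => Y a x * ∏ i ∈ s, Y i x) μ :=
      integrable_of_abs_le ((hm a).mul hPm) fun x => abs_mul_le_of_abs_le (habs a x) (hPabs x)
    have hYY : ∀ i, Integrable (fun x => Y a x * Y i x) μ := fun i =>
      integrable_of_abs_le ((hm a).mul (hm i)) fun x => abs_mul_le_of_abs_le (habs a x) (habs i x)
    have hYS : Integrable (fun x => Y a x * ∑ i ∈ s, Y i x) μ :=
      integrable_of_abs_le ((hm a).mul hSm) fun x => abs_mul_le_of_abs_le (habs a x) (hSabs x)
    simp only [integral_neg, neg_mul_neg] at hlow hup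
    rw [integral_sub hSi hPi] at hup
    simp only [mul_sub] at hup
    rw [integral_sub hYS hYP] at hup
    have e1 : ∫ x, ∑ i ∈ s, Y i x ∂μ = ∑ i ∈ s, ∫ x, Y i x ∂μ :=
      integral_finsetSum _ fun i _ => hint i
    have e2 : ∫ x, Y a x * ∑ i ∈ s, Y i x ∂μ = ∑ i ∈ s, ∫ x, Y a x * Y i x ∂μ := by
      simp_rw [Finset.mul_sum]
      exact integral_finsetSum _ fun i _ => hYY i
    rw [e1, e2, Finset.mul_sum] at hup
    have hsum : ∑ i ∈ s, ∫ x, Y a x * Y i x ∂μ - ∑ i ∈ s, (∫ x, Y a x ∂μ) * ∫ x, Y i x ∂μ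
        ≤ ∑ i ∈ s, B a i := by
      rw [← Finset.sum_sub_distrib]
      exact Finset.sum_le_sum fun i hi => hB a i (by rintro rfl; exact ha hi)
    have hYa0 : 0 ≤ ∫ x, Y a x ∂μ := integral_nonneg (h0 a)
    have hYa1 : ∫ x, Y a x ∂μ ≤ 1 := (le_abs_self _).trans (abs_integral_le_of_abs_le (habs a))
    have hsplit : ∑ i ∈ insert a s, ∑ j ∈ insert a s, B i j
        = B a a + ∑ j ∈ s, B a j + (∑ i ∈ s, B i a + ∑ i ∈ s, ∑ j ∈ s, B i j) := by
      simp_rw [Finset.sum_insert ha, Finset.sum_add_distrib]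
    have hBs : 0 ≤ ∑ i ∈ s, B i a := Finset.sum_nonneg fun i _ => hB0 _ _
    have hBaa := hB0 a a
    rw [hsplit]
    have htri : ∫ x, Y a x * ∏ i ∈ s, Y i x ∂μ - (∫ x, Y a x ∂μ) * ∏ i ∈ s, ∫ x, Y i x ∂μ
        = (∫ x, Y a x * ∏ i ∈ s, Y i x ∂μ - (∫ x, Y a x ∂μ) * ∫ x, ∏ i ∈ s, Y i x ∂μ)
          + (∫ x, Y a x ∂μ) * (∫ x, ∏ i ∈ s, Y i x ∂μ - ∏ i ∈ s, ∫ x, Y i x ∂μ) := by ring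
    rw [htri]
    have h2 : |(∫ x, Y a x ∂μ) * (∫ x, ∏ i ∈ s, Y i x ∂μ - ∏ i ∈ s, ∫ x, Y i x ∂μ)|
        ≤ ∑ i ∈ s, ∑ j ∈ s, B i j := by
      rw [abs_mul, abs_of_nonneg hYa0]
      exact (mul_le_of_le_one_left (abs_nonneg _) hYa1).trans ih
    have h3 : |∫ x, Y a x * ∏ i ∈ s, Y i x ∂μ - (∫ x, Y a x ∂μ) * ∫ x, ∏ i ∈ s, Y i x ∂μ|
        ≤ ∑ j ∈ s, B a j := by
      rw [abs_of_nonneg (by linarith)]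
      linarith
    linarith [abs_add_le
      (∫ x, Y a x * ∏ i ∈ s, Y i x ∂μ - (∫ x, Y a x ∂μ) * ∫ x, ∏ i ∈ s, Y i x ∂μ)
      ((∫ x, Y a x ∂μ) * (∫ x, ∏ i ∈ s, Y i x ∂μ - ∏ i ∈ s, ∫ x, Y i x ∂μ))]

/-! ### Gaussian vectors with a given Gram factor -/

/-- If the covariance of a centered Gaussian vector factors as `A * Aᵀ`, its law is that of `A ξ`
with independent standard Gaussian coordinates `ξ`. -/
lemma map_eq_of_gram {Ω ι κ : Type*} [MeasurableSpace Ω] [Fintype ι] [Fintype κ]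
    {P : Measure Ω} [IsProbabilityMeasure P] {X : Ω → ι → ℝ} {Λ : ι → ι → ℝ}
    (hX : IsCenteredGaussianVector P X Λ) (A : ι → κ → ℝ)
    (hA : ∀ x y, Λ x y = ∑ k, A x k * A y k) :
    P.map X = (Measure.pi fun _ : κ => gaussianReal 0 1).map (fun ξ x => ∑ k, A x k * ξ k) := by
  classical
  obtain ⟨hXm, hlin⟩ := hX
  have hTm : Measurable (fun (ξ : κ → ℝ) (x : ι) => ∑ k, A x k * ξ k) := by fun_prop
  have := Measure.isProbabilityMeasure_map (μ := P) hXm.aemeasurable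
  have := Measure.isProbabilityMeasure_map (μ := Measure.pi fun _ : κ => gaussianReal 0 1)
    hTm.aemeasurable
  refine Measure.ext_of_charFunDual ?_
  ext L
  set c : ι → ℝ := fun i => L (Pi.single i 1) with hc
  have hL : ∀ z : ι → ℝ, L z = ∑ i, c i * z i := by
    intro z
    rw [← L.sum_comp_single]
    refine Finset.sum_congr rfl fun i _ => ?_
    have : (Pi.single i (z i) : ι → ℝ) = z i • Pi.single i 1 := by
      rw [← Pi.single_smul]; simp
    simp [hc, this, mul_comm]
  have hvar : ∑ i, ∑ j, c i * c j * Λ i j = ∑ k, (∑ i, c i * A i k) ^ 2 := by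
    have : ∀ k, (∑ i, c i * A i k) ^ 2 = ∑ i, ∑ j, c i * c j * (A i k * A j k) := by
      intro k
      rw [sq, Finset.sum_mul_sum]
      exact Finset.sum_congr rfl fun i _ => Finset.sum_congr rfl fun j _ => by ring
    simp_rw [this, hA, Finset.mul_sum]
    rw [Finset.sum_comm]
    conv_rhs => rw [Finset.sum_comm]
    rw [Finset.sum_comm]
    exact Finset.sum_congr rfl fun i _ => Finset.sum_comm
  have hpos : 0 ≤ ∑ i, ∑ j, c i * c j * Λ i j := by
    rw [hvar]; exact Finset.sum_nonneg fun k _ => sq_nonneg _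
  -- the linear functional pulled back to the independent coordinates
  let L' : StrongDual ℝ (κ → ℝ) :=
    ∑ k, (∑ i, c i * A i k) • ContinuousLinearMap.proj (R := ℝ) (φ := fun _ : κ => ℝ) k
  have hL' : ∀ ξ, L' ξ = ∑ k, (∑ i, c i * A i k) * ξ k := by
    intro ξ; simp [L']
  have hLT : ∀ ξ : κ → ℝ, L (fun x => ∑ k, A x k * ξ k) = L' ξ := by
    intro ξ
    rw [hL, hL']
    simp_rw [Finset.mul_sum, Finset.sum_mul]
    rw [Finset.sum_comm]
    exact Finset.sum_congr rfl fun i _ => Finset.sum_congr rfl fun j _ => by ring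
  have lhs : charFunDual (P.map X) L = Complex.exp (-((∑ i, ∑ j, c i * c j * Λ i j : ℝ) : ℂ) / 2) := by
    rw [charFunDual_eq_charFun_map_one, Measure.map_map (by fun_prop) hXm]
    have : (⇑L ∘ X) = fun ω => ∑ i, c i * X ω i := by ext ω; simp [hL]
    rw [this, hlin c, charFun_gaussianReal]
    rw [Real.coe_toNNReal _ hpos]
    congr 1
    push_cast
    ring
  have rhs : charFunDual ((Measure.pi fun _ : κ => gaussianReal 0 1).map
      (fun ξ x => ∑ k, A x k * ξ k)) L = charFunDual (Measure.pi fun _ : κ => gaussianReal 0 1) L' := by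
    rw [charFunDual_apply, charFunDual_apply,
      integral_map hTm.aemeasurable (Measurable.aestronglyMeasurable (by fun_prop))]
    simp_rw [hLT]
  rw [lhs, rhs, charFunDual_pi, hvar]
  have each : ∀ k, charFunDual (gaussianReal 0 1) (L'.comp (.single ℝ (fun _ : κ => ℝ) k))
      = Complex.exp (-(((∑ i, c i * A i k) ^ 2 : ℝ) : ℂ) / 2) := by
    intro k
    rw [charFunDual_eq_charFun_map_one]
    have : (⇑(L'.comp (.single ℝ (fun _ : κ => ℝ) k))) = fun t => (∑ i, c i * A i k) * t := by
      ext t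
      rw [ContinuousLinearMap.comp_apply, hL']
      simp [Pi.single_apply]
    rw [this, gaussianReal_map_const_mul, charFun_gaussianReal]
    congr 1
    simp
    ring
  simp_rw [each]
  rw [← Complex.exp_sum]
  congr 1
  push_cast
  rw [← Finset.sum_div, ← Finset.sum_neg_distrib]

/-- Reindexing along any map, injective or not, preserves centered Gaussian vectors. -/
lemma IsCenteredGaussianVector.comp {Ω ι κ : Type*} [MeasurableSpace Ω] [Fintype ι] [Fintype κ]
    {P : Measure Ω} {X : Ω → ι → ℝ} {Λ : ι → ι → ℝ}
    (hX : IsCenteredGaussianVector P X Λ) (e : κ → ι) :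
    IsCenteredGaussianVector P (fun ω k => X ω (e k)) (fun k l => Λ (e k) (e l)) := by
  classical
  obtain ⟨hXm, hlin⟩ := hX
  refine ⟨measurable_pi_lambda _ fun k => (measurable_pi_apply (e k)).comp hXm, fun c => ?_⟩
  have key : ∀ z : ι → ℝ, ∑ i, (∑ k, if e k = i then c k else 0) * z i = ∑ k, c k * z (e k) := by
    intro z
    simp_rw [Finset.sum_mul]
    rw [Finset.sum_comm]
    refine Finset.sum_congr rfl fun k _ => ?_
    simp
  have h := hlin fun i => ∑ k, if e k = i then c k else 0
  simp_rw [key] at h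
  rw [h]
  congr 2
  simp_rw [mul_assoc, ← Finset.mul_sum]
  rw [key]
  refine Finset.sum_congr rfl fun k _ => ?_
  rw [key]

/-! ### The covariance kernel of a tree -/

/-- On a tree the kernel `ρ ^ dist x y`, `0 ≤ ρ ≤ 1`, is `A * Aᵀ` with `A` entrywise nonnegative.
The factor is built on an increasing family of subtrees `S`: the row of a vertex `x` joined to `S` by
the edge `p x` is `ρ` times the row of `p`, plus `√(1 - ρ²)` in the new column `x`. -/
lemma exists_gram_factor {V : Type*} [Fintype V] [DecidableEq V] {T : SimpleGraph V}
    (hT : T.IsTree) {ρ : ℝ} (h0 : 0 ≤ ρ) (h1 : ρ ≤ 1) :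
    ∃ A : V → V → ℝ, (∀ x w, 0 ≤ A x w) ∧ ∀ x y, ρ ^ T.dist x y = ∑ w, A x w * A y w := by
  have hdist : ∀ {x y : V} (w : T.Walk x y), w.IsPath → T.dist x y = w.length := by
    intro x y w hw
    obtain ⟨p, hp, hpl⟩ := hT.connected.exists_path_of_dist x y
    rw [← hpl, ((SimpleGraph.isTree_iff_existsUnique_path.1 hT).2 x y).unique hp hw]
  -- `S` is path-closed, so that adding a leaf `x` with parent `p` gives `dist y x = dist y p + 1`
  have main : ∀ k, k + 1 ≤ Fintype.card V → ∃ S : Finset V, S.card = k + 1 ∧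
      (∀ x ∈ S, ∀ y ∈ S, ∃ w : T.Walk x y, w.IsPath ∧ ∀ v ∈ w.support, v ∈ S) ∧
      ∃ A : V → V → ℝ, (∀ x w, 0 ≤ A x w) ∧ (∀ x ∈ S, ∀ w, w ∉ S → A x w = 0) ∧
        ∀ x ∈ S, ∀ y ∈ S, ρ ^ T.dist x y = ∑ w, A x w * A y w := by
    intro k
    induction k with
    | zero =>
      intro _
      obtain ⟨o⟩ := hT.connected.nonempty
      refine ⟨{o}, by simp, ?_, fun x w => if x = w then 1 else 0, ?_, ?_, ?_⟩
      · intro x hx y hy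
        rw [Finset.mem_singleton] at hx hy
        subst hx; subst hy
        exact ⟨SimpleGraph.Walk.nil, by simp, by simp⟩
      · intro x w; dsimp only; split_ifs <;> norm_num
      · intro x hx w hw
        have : x ≠ w := by rintro rfl; exact hw hx
        simp [this]
      · intro x hx y hy
        rw [Finset.mem_singleton] at hx hy
        subst hx; subst hy
        simp
    | succ k ih =>
      intro hk
      obtain ⟨S, hcard, hpath, A, hA0, hAS, hA⟩ := ih (by omega)
      -- an edge leaving `S`
      obtain ⟨o, ho⟩ : S.Nonempty := Finset.card_pos.1 (by omega)
      obtain ⟨b, hb⟩ : ∃ b, b ∉ S := by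
        by_contra! hall
        have : S = Finset.univ := Finset.eq_univ_iff_forall.2 hall
        rw [this, Finset.card_univ] at hcard
        omega
      obtain ⟨W⟩ := hT.connected.preconnected o b
      obtain ⟨d, -, hp, hx⟩ := W.exists_boundary_dart (S : Set V) (by simpa using ho)
        (by simpa using hb)
      obtain ⟨⟨p, x⟩, hadj⟩ := d
      simp only [Finset.mem_coe] at hp hx hadj
      have hyx : ∀ y ∈ S, ∃ w : T.Walk y x, w.IsPath ∧ (∀ v ∈ w.support, v ∈ insert x S) ∧
          w.length = T.dist y p + 1 := by
        intro y hy
        obtain ⟨w, hw, hws⟩ := hpath y hy p hp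
        refine ⟨w.concat hadj, hw.concat (fun h => hx (hws x h)) hadj, ?_, ?_⟩
        · intro v hv
          rw [SimpleGraph.Walk.support_concat] at hv
          simp only [List.mem_append, List.mem_singleton] at hv
          rcases hv with hv | rfl
          · exact Finset.mem_insert_of_mem (hws v hv)
          · exact Finset.mem_insert_self _ _
        · rw [SimpleGraph.Walk.length_concat, hdist w hw]
      have hdyx : ∀ y ∈ S, T.dist y x = T.dist y p + 1 := by
        intro y hy
        obtain ⟨w, hw, -, hl⟩ := hyx y hy
        rw [hdist w hw, hl]
      refine ⟨insert x S, by rw [Finset.card_insert_of_notMem hx, hcard], ?_, ?_⟩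
      · intro y hy z hz
        rw [Finset.mem_insert] at hy hz
        rcases hy with rfl | hy <;> rcases hz with rfl | hz
        · exact ⟨SimpleGraph.Walk.nil, by simp, by simp⟩
        · obtain ⟨w, hw, hws, -⟩ := hyx z hz
          refine ⟨w.reverse, hw.reverse, fun v hv => hws v ?_⟩
          simpa using hv
        · obtain ⟨w, hw, hws, -⟩ := hyx y hy
          exact ⟨w, hw, hws⟩
        · obtain ⟨w, hw, hws⟩ := hpath y hy z hz
          exact ⟨w, hw, fun v hv => Finset.mem_insert_of_mem (hws v hv)⟩
      · set s : ℝ := Real.sqrt (1 - ρ ^ 2) with hs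
        have hs0 : 0 ≤ s := Real.sqrt_nonneg _
        have hs2 : s ^ 2 = 1 - ρ ^ 2 := Real.sq_sqrt (by nlinarith)
        have hAx : ∀ y ∈ S, A y x = 0 := fun y hy => hAS y hy x hx
        have hne : ∀ y ∈ S, y ≠ x := fun y hy => by rintro rfl; exact hx hy
        have hcross : ∀ y ∈ S, ∑ w, A y w * (ρ * A p w + if w = x then s else 0)
            = ρ ^ T.dist y x := by
          intro y hy
          rw [hdyx y hy, pow_succ, hA y hy p hp, Finset.sum_mul]
          simp_rw [mul_add, Finset.sum_add_distrib]
          simp only [mul_ite, mul_zero, Finset.sum_ite_eq', Finset.mem_univ, if_true, hAx y hy,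
            zero_mul, add_zero]
          exact Finset.sum_congr rfl fun w _ => by ring
        refine ⟨fun y w => if y = x then ρ * A p w + (if w = x then s else 0) else A y w,
          ?_, ?_, ?_⟩
        · intro y w
          dsimp only
          split_ifs
          · exact add_nonneg (mul_nonneg h0 (hA0 _ _)) hs0
          · exact add_nonneg (mul_nonneg h0 (hA0 _ _)) le_rfl
          · exact hA0 _ _
        · intro y hy w hw
          rw [Finset.mem_insert, not_or] at hw
          rw [Finset.mem_insert] at hy
          rcases hy with rfl | hy
          · simp [hw.1, hAS p hp w hw.2]
          · simp [hne y hy, hAS y hy w hw.2]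
        · intro y hy z hz
          rw [Finset.mem_insert] at hy hz
          rcases hy with rfl | hy <;> rcases hz with rfl | hz
          · have hpp := hA p hp p hp
            rw [SimpleGraph.dist_self, pow_zero] at hpp
            have e : ∀ w, (ρ * A p w + if w = z then s else 0) * (ρ * A p w + if w = z then s else 0)
                = ρ ^ 2 * (A p w * A p w) + (if w = z then 2 * ρ * s * A p w + s ^ 2 else 0) := by
              intro w; split_ifs <;> ring
            simp only [if_true, SimpleGraph.dist_self, pow_zero, e]
            rw [Finset.sum_add_distrib, ← Finset.mul_sum, ← hpp]
            simp [hAx p hp, hs2]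
          · simp only [if_true, if_neg (hne z hz)]
            rw [SimpleGraph.dist_comm, ← hcross z hz]
            exact Finset.sum_congr rfl fun w _ => mul_comm _ _
          · simp only [if_true, if_neg (hne y hy)]
            rw [← hcross y hy]
          · simp only [if_neg (hne y hy), if_neg (hne z hz)]
            exact hA y hy z hz
  have hcard : 0 < Fintype.card V := Fintype.card_pos_iff.2 hT.connected.nonempty
  obtain ⟨S, hS, -, A, hA0, -, hA⟩ := main (Fintype.card V - 1) (by omega)
  have hSu : S = Finset.univ := by
    rw [← Finset.card_eq_iff_eq_univ]; omega
  exact ⟨A, hA0, fun x y => hA x (by simp [hSu]) y (by simp [hSu])⟩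

/-- Crude bound on the size of a ball in a graph of maximal degree at most `r`. -/
lemma card_ball_le {V : Type*} [Fintype V] [DecidableEq V] (T : SimpleGraph V)
    [DecidableRel T.Adj] (hT : T.Connected) (r : ℕ) (hdeg : ∀ v, T.degree v ≤ r) (x : V) (L : ℕ) :
    (Finset.univ.filter fun y => T.dist x y ≤ L).card ≤ (r + 1) ^ L := by
  induction L with
  | zero =>
    rw [pow_zero, Finset.card_le_one]
    intro a ha b hb
    simp only [nonpos_iff_eq_zero, Finset.mem_filter, Finset.mem_univ, true_and,
      hT.dist_eq_zero_iff] at ha hb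
    rw [← ha, ← hb]
  | succ L ih =>
    have hsub : (Finset.univ.filter fun y => T.dist x y ≤ L + 1) ⊆
        (Finset.univ.filter fun y => T.dist x y ≤ L).biUnion
          fun v => insert v (T.neighborFinset v) := by
      intro y hy
      simp only [Finset.mem_filter, Finset.mem_univ, true_and] at hy
      simp only [Finset.mem_biUnion, Finset.mem_filter, Finset.mem_univ, true_and,
        Finset.mem_insert, SimpleGraph.mem_neighborFinset]
      by_cases h : T.dist x y ≤ L
      · exact ⟨y, h, Or.inl rfl⟩
      · obtain ⟨w, hw⟩ := hT.exists_walk_length_eq_dist y x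
        rw [SimpleGraph.dist_comm] at hw
        cases w with
        | nil => simp at h
        | cons hadj w' =>
          rename_i v
          refine ⟨v, ?_, Or.inr hadj.symm⟩
          rw [SimpleGraph.Walk.length_cons] at hw
          have := SimpleGraph.dist_le w'
          rw [SimpleGraph.dist_comm] at this
          omega
    refine (Finset.card_le_card hsub).trans (Finset.card_biUnion_le.trans ?_)
    refine (Finset.sum_le_card_nsmul _ _ (r + 1) fun v _ => ?_).trans ?_
    · refine (Finset.card_insert_le _ _).trans ?_
      rw [SimpleGraph.card_neighborFinset_eq_degree]
      exact Nat.succ_le_succ (hdeg v)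
    · rw [smul_eq_mul, pow_succ]
      exact Nat.mul_le_mul_right _ ih

/-! ### Gaussian extreme-value asymptotics -/

lemma tendsto_log_add_pow_div (c : ℝ) :
    Tendsto (fun x : ℝ => (Real.log x + c) / x) atTop (nhds 0) ∧
      Tendsto (fun x : ℝ => (Real.log x + c) ^ 2 / x) atTop (nhds 0) := by
  have h1 : Tendsto (fun x : ℝ => Real.log x / x) atTop (nhds 0) := by
    simpa using (Real.isLittleO_pow_log_id_atTop (n := 1)).tendsto_div_nhds_zero
  have h2 : Tendsto (fun x : ℝ => Real.log x ^ 2 / x) atTop (nhds 0) := by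
    simpa using (Real.isLittleO_pow_log_id_atTop (n := 2)).tendsto_div_nhds_zero
  have h0 : ∀ d : ℝ, Tendsto (fun x : ℝ => d / x) atTop (nhds 0) := fun d =>
    tendsto_const_nhds.div_atTop tendsto_id
  constructor
  · have := h1.add (h0 c)
    rw [add_zero] at this
    exact this.congr fun x => by ring
  · have := (h2.add (h1.const_mul (2 * c))).add (h0 (c ^ 2))
    simp only [mul_zero, add_zero] at this
    exact this.congr fun x => by ring

/-- `a_N = √(2 log N) (1 - m / (4 log N))` with `m = log log N + log 4π`. -/
lemma aSeq_eq {N : ℝ} (hN : 0 < Real.log N) :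
    aSeq N = Real.sqrt (2 * Real.log N) *
      (1 - (Real.log (Real.log N) + Real.log (4 * Real.pi)) / Real.log N / 4) := by
  have hs : 0 < Real.sqrt (2 * Real.log N) := Real.sqrt_pos.2 (by positivity)
  have h2 : Real.sqrt (2 * Real.log N) ^ 2 = 2 * Real.log N := Real.sq_sqrt (by positivity)
  have hl : Real.log N = Real.sqrt (2 * Real.log N) ^ 2 / 2 := by rw [h2]; ring
  unfold aSeq
  set m := Real.log (Real.log N) + Real.log (4 * Real.pi)
  set s := Real.sqrt (2 * Real.log N)
  rw [hl]
  field_simp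
  ring

lemma tendsto_log_natCast : Tendsto (fun N : ℕ => Real.log (N : ℝ)) atTop atTop :=
  Real.tendsto_log_atTop.comp tendsto_natCast_atTop_atTop

lemma tendsto_ratio : Tendsto (fun N : ℕ => 1 - (Real.log (Real.log (N : ℝ)) +
    Real.log (4 * Real.pi)) / Real.log N / 4) atTop (nhds 1) := by
  have := (((tendsto_log_add_pow_div (Real.log (4 * Real.pi))).1.comp
    tendsto_log_natCast).div_const 4).const_sub 1
  simpa using this

lemma tendsto_aSeq : Tendsto (fun N : ℕ => aSeq (N : ℝ)) atTop atTop := by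
  have h1 : Tendsto (fun N : ℕ => Real.sqrt (2 * Real.log (N : ℝ))) atTop atTop :=
    Real.tendsto_sqrt_atTop.comp (tendsto_log_natCast.const_mul_atTop two_pos)
  refine (h1.atTop_mul_pos one_pos tendsto_ratio).congr' ?_
  filter_upwards [tendsto_log_natCast.eventually_gt_atTop 0] with N hN
  rw [aSeq_eq hN]

lemma tendsto_aSeq_sq_div : Tendsto (fun N : ℕ => aSeq (N : ℝ) ^ 2 / Real.log N) atTop (nhds 2) := by
  have := (tendsto_ratio.pow 2).const_mul 2
  rw [one_pow, mul_one] at this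
  refine this.congr' ?_
  filter_upwards [tendsto_log_natCast.eventually_gt_atTop 0] with N hN
  rw [aSeq_eq hN, mul_pow, Real.sq_sqrt (by positivity)]
  field_simp

/-- The defining property of the centering sequence: `N` times the standard Gaussian density at
`a_N` is asymptotic to `a_N`. With `l = log N` and `m = log l + log 4π` the ratio is exactly
`exp (-m² / (16 l)) / (1 - m / (4 l))`. -/
lemma tendsto_normalisation : Tendsto (fun N : ℕ => (N : ℝ) * Real.exp (-aSeq (N : ℝ) ^ 2 / 2) /
    (aSeq (N : ℝ) * Real.sqrt (2 * Real.pi))) atTop (nhds 1) := by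
  have h2 := (((tendsto_log_add_pow_div (Real.log (4 * Real.pi))).2.comp
    tendsto_log_natCast).div_const 16).neg
  simp only [zero_div, neg_zero] at h2
  have h3 := ((Real.continuous_exp.tendsto 0).comp h2).div tendsto_ratio one_ne_zero
  rw [Real.exp_zero, div_one] at h3
  refine h3.congr' ?_
  filter_upwards [tendsto_log_natCast.eventually_gt_atTop 0,
    tendsto_aSeq.eventually_gt_atTop 0, eventually_gt_atTop 0] with N hN ha hN0
  have hN0' : (0 : ℝ) < N := by exact_mod_cast hN0
  have haeq := aSeq_eq hN
  rw [haeq] at ha ⊢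
  set l := Real.log (N : ℝ) with hl
  set m := Real.log l + Real.log (4 * Real.pi) with hm
  have hq : 0 < 1 - m / l / 4 := pos_of_mul_pos_right ha (Real.sqrt_nonneg _)
  have hs2 : Real.sqrt (2 * l) ^ 2 = 2 * l := Real.sq_sqrt (by positivity)
  have hprod : Real.sqrt (2 * l) * Real.sqrt (2 * Real.pi) = Real.exp (m / 2) := by
    rw [← Real.sqrt_mul (by positivity), hm, ← Real.log_mul hN.ne' (by positivity),
      Real.exp_half, Real.exp_log (by positivity)]
    congr 1; ring
  have hexp : (N : ℝ) * Real.exp (-(Real.sqrt (2 * l) * (1 - m / l / 4)) ^ 2 / 2)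
      = Real.exp (-(m ^ 2 / l / 16)) * Real.exp (m / 2) := by
    conv_lhs => rw [← Real.exp_log hN0', ← hl]
    rw [← Real.exp_add, ← Real.exp_add, mul_pow, hs2]
    congr 1
    field_simp
    ring
  have hden : Real.sqrt (2 * l) * (1 - m / l / 4) * Real.sqrt (2 * Real.pi)
      = Real.exp (m / 2) * (1 - m / l / 4) := by rw [← hprod]; ring
  rw [hexp, hden]
  simp only [Function.comp_apply, Pi.div_apply]
  have := Real.exp_pos (m / 2)
  rw [← hl, ← hm, mul_comm (Real.exp (-_)) (Real.exp (m / 2)), mul_div_mul_left _ _ (ne_of_gt this)]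

/-- The substitution `y = a * (z - a)` in a standard Gaussian integral. -/
lemma integral_gaussian_rescale (h : ℝ → ℝ) {a : ℝ} (ha : 0 < a) :
    ∫ z, h (a * (z - a)) ∂gaussianReal 0 1 = Real.exp (-a ^ 2 / 2) / (a * Real.sqrt (2 * Real.pi)) *
      ∫ y, Real.exp (-y) * Real.exp (-y ^ 2 / (2 * a ^ 2)) * h y := by
  rw [integral_gaussianReal_eq_integral_smul one_ne_zero]
  set G : ℝ → ℝ := fun y => gaussianPDFReal 0 1 (a + y / a) * h y with hG
  have e1 : ∀ z, gaussianPDFReal 0 1 z • h (a * (z - a)) = G (a * (z - a)) := by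
    intro z
    simp only [hG, smul_eq_mul]
    congr 2
    field_simp
    ring
  simp_rw [e1]
  rw [integral_sub_right_eq_self (fun z => G (a * z)) a, Measure.integral_comp_mul_left,
    abs_of_pos (inv_pos.2 ha), ← integral_const_mul, ← integral_smul]
  refine integral_congr_ae (ae_of_all _ fun y => ?_)
  simp only [hG, gaussianPDFReal, smul_eq_mul, NNReal.coe_one, mul_one, sub_zero]
  have : Real.exp (-(a + y / a) ^ 2 / 2)
      = Real.exp (-a ^ 2 / 2) * (Real.exp (-y) * Real.exp (-y ^ 2 / (2 * a ^ 2))) := by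
    rw [← Real.exp_add, ← Real.exp_add]
    congr 1
    field_simp
    ring
  rw [this]
  field_simp

/-- The one-point function `N E[h (a_N (Z - a_N) + δ_N)]` converges to the integral of `h` against
the intensity `e^{-y} dy`, for any vanishing shift `δ_N`. -/
lemma tendsto_intensity (h : ℝ → ℝ) (hc : Continuous h) (hb : ∀ y, |h y| ≤ 1) {K : ℝ}
    (hK : ∀ y ≤ -K, h y = 0) (δ : ℕ → ℝ) (hδ : Tendsto δ atTop (nhds 0)) :
    Tendsto (fun N : ℕ => (N : ℝ) *
      ∫ z, h (aSeq (N : ℝ) * (z - aSeq (N : ℝ)) + δ N) ∂gaussianReal 0 1) atTop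
      (nhds (∫ y, h y * Real.exp (-y))) := by
  have hint : Tendsto (fun N : ℕ => ∫ y, Real.exp (-y) *
      Real.exp (-y ^ 2 / (2 * aSeq (N : ℝ) ^ 2)) * h (y + δ N)) atTop
      (nhds (∫ y, Real.exp (-y) * h y)) := by
    refine tendsto_integral_filter_of_dominated_convergence
      ((Set.Ici (-K - 1)).indicator fun y => Real.exp (-y)) ?_ ?_ ?_ ?_
    · refine Eventually.of_forall fun N => Continuous.aestronglyMeasurable ?_
      fun_prop
    · filter_upwards [hδ.eventually (gt_mem_nhds one_pos)] with N hN
      refine ae_of_all _ fun y => ?_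
      by_cases hy : y ∈ Set.Ici (-K - 1)
      · rw [Set.indicator_of_mem hy, norm_mul, norm_mul, Real.norm_eq_abs, Real.norm_eq_abs,
          Real.norm_eq_abs, Real.abs_exp, Real.abs_exp]
        have h1 : Real.exp (-y ^ 2 / (2 * aSeq (N : ℝ) ^ 2)) ≤ 1 := by
          rw [Real.exp_le_one_iff, neg_div]
          exact neg_nonpos.2 (by positivity)
        calc _ ≤ Real.exp (-y) * 1 * 1 := by
              gcongr
              exact hb _
          _ = _ := by ring
      · rw [Set.indicator_of_notMem hy]
        rw [Set.mem_Ici, not_le] at hy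
        rw [hK _ (by linarith)]
        simp
    · rw [integrable_indicator_iff measurableSet_Ici, integrableOn_Ici_iff_integrableOn_Ioi]
      simpa using exp_neg_integrableOn_Ioi (-K - 1) one_pos
    · refine ae_of_all _ fun y => ?_
      have h1 : Tendsto (fun N : ℕ => -y ^ 2 / (2 * aSeq (N : ℝ) ^ 2)) atTop (nhds 0) :=
        tendsto_const_nhds.div_atTop
          (((tendsto_pow_atTop two_ne_zero).comp tendsto_aSeq).const_mul_atTop two_pos)
      have h2 := (Real.continuous_exp.tendsto 0).comp h1
      have h3 : Tendsto (fun N => h (y + δ N)) atTop (nhds (h y)) := by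
        have := (hc.tendsto (y + 0)).comp (hδ.const_add y)
        simpa [Function.comp_def] using this
      have := (h2.const_mul (Real.exp (-y))).mul h3
      rw [Real.exp_zero, mul_one] at this
      exact this
  have := tendsto_normalisation.mul hint
  rw [one_mul] at this
  have hcomm : ∀ y, h y * Real.exp (-y) = Real.exp (-y) * h y := fun y => mul_comm _ _
  simp_rw [hcomm]
  refine this.congr' ?_
  filter_upwards [tendsto_aSeq.eventually_gt_atTop 0] with N ha
  rw [integral_gaussian_rescale (fun y => h (y + δ N)) ha]
  ring

/-- Chernoff bound for a centered Gaussian, with the exponential parameter `t` left free. -/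
lemma gaussian_tail_le {Ω : Type*} [MeasurableSpace Ω] {P : Measure Ω} [IsProbabilityMeasure P]
    {X : Ω → ℝ} {v : NNReal} (hX : P.map X = gaussianReal 0 v) (c t : ℝ) (ht : 0 ≤ t) :
    P.real {ω | c ≤ X ω} ≤ Real.exp (-t * c + v * t ^ 2 / 2) := by
  have hXm : AEMeasurable X P := by
    by_contra h
    rw [Measure.map_of_not_aemeasurable h] at hX
    exact (IsProbabilityMeasure.ne_zero (gaussianReal 0 v)) hX.symm
  have hi : Integrable (fun ω => Real.exp (t * X ω)) P := by
    have := integrable_exp_mul_gaussianReal (μ := 0) (v := v) t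
    rw [← hX] at this
    exact (integrable_map_measure (Measurable.aestronglyMeasurable (by fun_prop)) hXm).1 this
  refine (measure_ge_le_exp_mul_mgf c ht hi).trans ?_
  rw [mgf_gaussianReal hX, ← Real.exp_add]
  simp

/-! ### Two-point estimates -/

/-- For correlation at most `1/2` both factors are nonzero only if `W 0 + W 1 ≥ 2 (a - K / a)`, and
this sum has variance at most `3`. -/
lemma near_pair {Ω : Type*} [MeasurableSpace Ω] {P : Measure Ω} [IsProbabilityMeasure P]
    {W : Ω → Fin 2 → ℝ} {Λ : Fin 2 → Fin 2 → ℝ} (hW : IsCenteredGaussianVector P W Λ) {ρ : ℝ}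
    (h00 : Λ 0 0 = 1) (h11 : Λ 1 1 = 1) (h01 : Λ 0 1 = ρ) (h10 : Λ 1 0 = ρ)
    (hρ1 : ρ ≤ 1 / 2) {h : ℝ → ℝ} (h0 : ∀ y, 0 ≤ h y) (h1 : ∀ y, h y ≤ 1)
    {K a : ℝ} (hK : ∀ y ≤ -K, h y = 0) (ha : 0 < a) (hKa : K ≤ a ^ 2) :
    ∫ ω, h (a * (W ω 0 - a)) * h (a * (W ω 1 - a)) ∂P ≤ Real.exp (-(2 / 3) * (a - K / a) ^ 2) := by
  obtain ⟨hWm, hlin⟩ := hW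
  have hu : 0 ≤ a - K / a := by
    rw [sub_nonneg, div_le_iff₀ ha]; nlinarith
  set u := a - K / a with hu_def
  have hsum := hlin fun _ => 1
  simp only [Fin.sum_univ_two, one_mul, h00, h11, h01, h10] at hsum
  have hS : MeasurableSet {ω | 2 * u ≤ W ω 0 + W ω 1} := by
    apply measurableSet_le <;> fun_prop
  have hzero : ∀ z, h (a * (z - a)) ≠ 0 → u ≤ z := by
    intro z hz
    by_contra! hlt
    refine hz (hK _ ?_)
    have : z - a ≤ -(K / a) := by linarith
    calc a * (z - a) ≤ a * (-(K / a)) := by gcongr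
      _ = -K := by field_simp
  calc ∫ ω, h (a * (W ω 0 - a)) * h (a * (W ω 1 - a)) ∂P
      ≤ ∫ ω, {ω | 2 * u ≤ W ω 0 + W ω 1}.indicator 1 ω ∂P := by
        refine integral_mono_of_nonneg (ae_of_all _ fun ω => mul_nonneg (h0 _) (h0 _))
          ((integrable_const (1 : ℝ)).indicator hS) (ae_of_all _ fun ω => ?_)
        dsimp only
        by_cases hω : ω ∈ {ω | 2 * u ≤ W ω 0 + W ω 1}
        · rw [Set.indicator_of_mem hω]
          exact mul_le_one₀ (h1 _) (h0 _) (h1 _)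
        · rw [Set.indicator_of_notMem hω]
          by_contra! hpos
          have := hzero _ (left_ne_zero_of_mul hpos.ne')
          have := hzero _ (right_ne_zero_of_mul hpos.ne')
          exact hω (by simp only [Set.mem_ofPred_eq]; linarith)
    _ = P.real {ω | 2 * u ≤ W ω 0 + W ω 1} := by rw [integral_indicator_one hS]
    -- `t = 2 u / 3` is the optimal Chernoff parameter for variance `3`
    _ ≤ _ := gaussian_tail_le hsum (2 * u) (2 * u / 3) (by positivity)
    _ ≤ _ := by
        refine Real.exp_le_exp.2 ?_
        have hv : (((1 + ρ + (ρ + 1)).toNNReal : NNReal) : ℝ) ≤ 3 := by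
          rw [Real.coe_toNNReal']
          exact max_le (by linarith) (by norm_num)
        have : 0 ≤ (2 * u / 3) ^ 2 := sq_nonneg _
        nlinarith

/-- For a small correlation `ρ` the pair is nearly independent: off the event `W 0 ≥ 2 a`, which
costs `exp (-2 a ^ 2)`, the term `ρ W 0` of `W 1 = ρ W 0 + √(1 - ρ²) ξ` moves the argument of the
second factor by at most `2 a ^ 2 ρ ≤ δ`. -/
lemma far_pair {Ω : Type*} [MeasurableSpace Ω] {P : Measure Ω} [IsProbabilityMeasure P]
    {W : Ω → Fin 2 → ℝ} {Λ : Fin 2 → Fin 2 → ℝ} (hW : IsCenteredGaussianVector P W Λ) {ρ : ℝ}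
    (h00 : Λ 0 0 = 1) (h11 : Λ 1 1 = 1) (h01 : Λ 0 1 = ρ) (h10 : Λ 1 0 = ρ) (hρ0 : 0 ≤ ρ)
    (hρ1 : ρ ≤ 1 / 4) {h : ℝ → ℝ} (hmono : Monotone h) (h0 : ∀ y, 0 ≤ h y) (h1 : ∀ y, h y ≤ 1)
    {K a δ : ℝ} (hK : ∀ y ≤ -K, h y = 0) (ha : 0 < a) (hKa : 2 * K ≤ a ^ 2)
    (hδ : 2 * a ^ 2 * ρ ≤ δ) :
    ∫ ω, h (a * (W ω 0 - a)) * h (a * (W ω 1 - a)) ∂P ≤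
      (∫ z, h (a * (z - a)) ∂gaussianReal 0 1) * (∫ z, h (a * (z - a) + δ) ∂gaussianReal 0 1)
        + Real.exp (-2 * a ^ 2) := by
  have hm : Measurable h := hmono.measurable
  have habs : ∀ y, |h y| ≤ 1 := fun y => abs_le.2 ⟨by linarith [h0 y], h1 y⟩
  set s := Real.sqrt (1 - ρ ^ 2) with hs
  have hs0 : 0 ≤ s := Real.sqrt_nonneg _
  have hs2 : s ^ 2 = 1 - ρ ^ 2 := Real.sq_sqrt (by nlinarith)
  have hs1 : s ≤ 1 := by nlinarith [sq_nonneg ρ]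
  -- the pair has the law of `(ξ₀, ρ ξ₀ + √(1-ρ²) ξ₁)`
  have hlaw := map_eq_of_gram hW (fun i k => (![![1, 0], ![ρ, s]] : Matrix (Fin 2) (Fin 2) ℝ) i k) (by
    intro i j
    fin_cases i <;> fin_cases j <;>
      simp [Fin.sum_univ_two, h00, h11, h01, h10]
    nlinarith)
  have hF : Measurable fun w : Fin 2 → ℝ => h (a * (w 0 - a)) * h (a * (w 1 - a)) := by fun_prop
  have e1 : ∫ ω, h (a * (W ω 0 - a)) * h (a * (W ω 1 - a)) ∂P
      = ∫ w, h (a * (w 0 - a)) * h (a * (w 1 - a)) ∂(P.map W) :=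
    (integral_map hW.1.aemeasurable hF.aestronglyMeasurable).symm
  rw [e1, hlaw, integral_map (Measurable.aemeasurable (by fun_prop)) hF.aestronglyMeasurable]
  have mp := (measurePreserving_finTwoArrow (gaussianReal 0 1)).symm
  rw [← mp.integral_comp']
  simp only [Fin.sum_univ_two, Matrix.cons_val_zero, Matrix.cons_val_one, one_mul, zero_mul,
    add_zero]
  have e2 : ∀ p : ℝ × ℝ, (MeasurableEquiv.finTwoArrow.symm p : Fin 2 → ℝ) 0 = p.1 ∧
      (MeasurableEquiv.finTwoArrow.symm p : Fin 2 → ℝ) 1 = p.2 := fun p => ⟨rfl, rfl⟩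
  simp only [e2]
  set γ := gaussianReal 0 1 with hγ
  have hS : MeasurableSet {z : ℝ | 2 * a ≤ z} := measurableSet_Ici
  have hpt : ∀ p : ℝ × ℝ, h (a * (p.1 - a)) * h (a * (ρ * p.1 + s * p.2 - a)) ≤
      h (a * (p.1 - a)) * h (a * (p.2 - a) + δ) + {z : ℝ | 2 * a ≤ z}.indicator 1 p.1 * 1 := by
    rintro ⟨x, z⟩
    by_cases hx : x ∈ {z : ℝ | 2 * a ≤ z}
    · simp only [Set.indicator_of_mem hx, Pi.one_apply, mul_one]
      have := mul_nonneg (h0 (a * (x - a))) (h0 (a * (z - a) + δ))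
      linarith [mul_le_one₀ (h1 (a * (x - a))) (h0 (a * (ρ * x + s * z - a)))
        (h1 (a * (ρ * x + s * z - a)))]
    · simp only [Set.indicator_of_notMem hx, zero_mul, add_zero]
      simp only [Set.mem_ofPred_eq, not_le] at hx
      refine mul_le_mul_of_nonneg_left ?_ (h0 _)
      have hρx : ρ * x ≤ ρ * (2 * a) := by gcongr
      rcases le_total 0 z with hz | hz
      · apply hmono
        have : s * z ≤ z := mul_le_of_le_one_left hz hs1
        have : a * (ρ * x + s * z - a) ≤ a * (ρ * (2 * a) + z - a) := by gcongr
        nlinarith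
      -- for `z ≤ 0` the bound `s * z ≤ z` fails, but the left-hand side vanishes
      · rw [hK _ ?_]
        · exact h0 _
        have : s * z ≤ 0 := mul_nonpos_of_nonneg_of_nonpos hs0 hz
        have : a * (ρ * x + s * z - a) ≤ a * (ρ * (2 * a) + 0 - a) := by gcongr
        nlinarith
  have i1 : Integrable (fun p : ℝ × ℝ => h (a * (p.1 - a)) * h (a * (p.2 - a) + δ)) (γ.prod γ) :=
    integrable_of_abs_le (by fun_prop) fun p => abs_mul_le_of_abs_le (habs _) (habs _)
  have i2 : Integrable (fun p : ℝ × ℝ => {z : ℝ | 2 * a ≤ z}.indicator (1 : ℝ → ℝ) p.1 * 1)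
      (γ.prod γ) :=
    (integrable_const (μ := γ) (1 : ℝ) |>.indicator hS).mul_prod (integrable_const (μ := γ) (1 : ℝ))
  have i0 : Integrable (fun p : ℝ × ℝ => h (a * (p.1 - a)) * h (a * (ρ * p.1 + s * p.2 - a)))
      (γ.prod γ) :=
    integrable_of_abs_le (by fun_prop) fun p => abs_mul_le_of_abs_le (habs _) (habs _)
  refine (integral_mono i0 (i1.add i2) hpt).trans ?_
  simp only [Pi.add_apply]
  rw [integral_add i1 i2,
    integral_prod_mul (fun x => h (a * (x - a))) (fun z => h (a * (z - a) + δ)),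
    integral_prod_mul ({z : ℝ | 2 * a ≤ z}.indicator (1 : ℝ → ℝ)) (fun _ => (1 : ℝ)),
    integral_indicator_one hS]
  gcongr
  simp only [integral_const, probReal_univ, smul_eq_mul, mul_one]
  have := gaussian_tail_le (P := γ) (X := id) (v := 1) (by rw [Measure.map_id]) (2 * a) (2 * a)
    (by positivity)
  refine this.trans (le_of_eq ?_)
  congr 1
  simp
  ring

/-! ### Comparison with independent coordinates -/

/-- Comparison of the Laplace functional on one tree with its value for independent coordinates. The
first error term comes from pairs at distance at most `L`, the second from the other pairs. -/
lemma laplace_compare {V Ω : Type*} [Fintype V] [DecidableEq V] [MeasurableSpace Ω]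
    {T : SimpleGraph V} [DecidableRel T.Adj] (hT : T.IsTree) {r : ℕ} (hr : 3 ≤ r)
    (hdeg : ∀ v, T.degree v ≤ r) {P : Measure Ω} [IsProbabilityMeasure P] {Z : Ω → V → ℝ}
    (hZ : IsCenteredGaussianVector P Z fun x y => (((r : ℝ) - 1) ^ T.dist x y)⁻¹)
    {φ : ℝ → ℝ} (hφ : Monotone φ) (hφ0 : ∀ y, 0 ≤ φ y) {K a : ℝ} (hK0 : 0 ≤ K)
    (hK : ∀ y ≤ -K, φ y = 0) (ha : 0 < a) (hKa : 2 * K ≤ a ^ 2) {L : ℕ} (hL : 2 ≤ L)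
    {p q : ℝ} (hp : p = ∫ z, (1 - Real.exp (-φ (a * (z - a)))) ∂gaussianReal 0 1)
    (hq : q = ∫ z, (1 - Real.exp (-φ (a * (z - a) + 2 * a ^ 2 * (1 / 2) ^ L))) ∂gaussianReal 0 1) :
    |∫ ω, Real.exp (-∑ x, φ (a * (Z ω x - a))) ∂P - (1 - p) ^ Fintype.card V| ≤
      Fintype.card V * ((r + 1 : ℝ) ^ L * Real.exp (-(2 / 3) * (a - K / a) ^ 2)) +
        Fintype.card V * (Fintype.card V * (p * (q - p) + Real.exp (-2 * a ^ 2))) := by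
  set h : ℝ → ℝ := fun y => 1 - Real.exp (-φ y) with hh
  have hmono : Monotone h := fun x y hxy =>
    sub_le_sub_left (Real.exp_le_exp.2 (neg_le_neg (hφ hxy))) _
  have hm : Measurable h := hmono.measurable
  have hφm : Measurable φ := hφ.measurable
  have h0 : ∀ y, 0 ≤ h y := fun y => sub_nonneg.2 (Real.exp_le_one_iff.2 (by linarith [hφ0 y]))
  have h1 : ∀ y, h y ≤ 1 := fun y => by simp only [hh]; linarith [Real.exp_pos (-φ y)]
  have habs : ∀ y, |h y| ≤ 1 := fun y => abs_le.2 ⟨by linarith [h0 y], h1 y⟩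
  have hhK : ∀ y ≤ -K, h y = 0 := fun y hy => by simp [hh, hK y hy]
  have hr' : (2 : ℝ) ≤ (r : ℝ) - 1 := by
    have : (3 : ℝ) ≤ r := by exact_mod_cast hr
    linarith
  set ρ : ℝ := ((r : ℝ) - 1)⁻¹ with hρ
  have hρ0 : 0 ≤ ρ := inv_nonneg.2 (by linarith)
  have hρ2 : ρ ≤ 1 / 2 := by
    rw [hρ, one_div]; exact inv_anti₀ two_pos hr'
  simp_rw [← inv_pow, ← hρ] at hZ
  have hZm : Measurable Z := hZ.1
  -- the law of `Z` is associated, being the image of a product measure under a monotone map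
  have hassoc : IsAssociated (P.map Z) := by
    obtain ⟨A, hA0, hA⟩ := exists_gram_factor hT hρ0 (by linarith)
    rw [map_eq_of_gram hZ A hA]
    refine (isAssociated_pi _).map (fun ξ ζ hξ x => ?_) (by fun_prop)
    exact Finset.sum_le_sum fun k _ => mul_le_mul_of_nonneg_left (hξ k) (hA0 _ _)
  have : IsProbabilityMeasure (P.map Z) := Measure.isProbabilityMeasure_map hZm.aemeasurable
  have hmarg : ∀ x, P.map (fun ω => Z ω x) = gaussianReal 0 1 := by
    intro x
    have := hZ.2 (Pi.single x 1)
    simpa [Pi.single_apply] using this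
  have hgx : ∀ x, ∫ ω, h (a * (Z ω x - a)) ∂P = p := by
    intro x
    rw [hp, ← hmarg x, integral_map (Measurable.aemeasurable (by fun_prop))
      (Measurable.aestronglyMeasurable (by fun_prop))]
  have hgi : ∀ x, Integrable (fun ω => h (a * (Z ω x - a))) P := fun x =>
    integrable_of_abs_le (by fun_prop) fun ω => habs _
  have hggi : ∀ x y, Integrable (fun ω => h (a * (Z ω x - a)) * h (a * (Z ω y - a))) P := fun x y =>
    integrable_of_abs_le (by fun_prop) fun ω => abs_mul_le_of_abs_le (habs _) (habs _)
  set δ : ℝ := 2 * a ^ 2 * (1 / 2) ^ L with hδ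
  have hδ0 : 0 ≤ δ := by positivity
  have hp0 : 0 ≤ p := by rw [hp]; exact integral_nonneg fun z => h0 _
  have hpq : p ≤ q := by
    rw [hp, hq]
    exact integral_mono (integrable_of_abs_le (f := fun z => h (a * (z - a))) (by fun_prop)
      fun z => habs _) (integrable_of_abs_le (f := fun z => h (a * (z - a) + δ)) (by fun_prop)
      fun z => habs _) fun z => hmono (by linarith)
  set E1 := Real.exp (-(2 / 3) * (a - K / a) ^ 2)
  set E2 := Real.exp (-2 * a ^ 2)
  set Y : V → (V → ℝ) → ℝ := fun x z => Real.exp (-φ (a * (z x - a))) with hY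
  have hYm : ∀ x, Measurable (Y x) := fun x => by fun_prop
  have hYx : ∀ x, ∫ z, Y x z ∂(P.map Z) = 1 - p := by
    intro x
    rw [integral_map hZm.aemeasurable (hYm x).aestronglyMeasurable, ← hgx x]
    have : ∀ ω, Y x (Z ω) = 1 - h (a * (Z ω x - a)) := fun ω => by simp [hY, hh]
    simp_rw [this]
    rw [integral_sub (integrable_const _) (hgi x)]
    simp
  have hYY : ∀ x y, ∫ z, Y x z * Y y z ∂(P.map Z) - (∫ z, Y x z ∂(P.map Z)) * ∫ z, Y y z ∂(P.map Z)
      = ∫ ω, h (a * (Z ω x - a)) * h (a * (Z ω y - a)) ∂P - p ^ 2 := by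
    intro x y
    rw [hYx, hYx, integral_map (f := fun z => Y x z * Y y z) hZm.aemeasurable
      ((hYm x).mul (hYm y)).aestronglyMeasurable]
    have : ∀ ω, Y x (Z ω) * Y y (Z ω) = ((1 - h (a * (Z ω x - a))) - h (a * (Z ω y - a)))
        + h (a * (Z ω x - a)) * h (a * (Z ω y - a)) := fun ω => by simp only [hY, hh]; ring
    simp_rw [this]
    have j1 : Integrable (fun ω => 1 - h (a * (Z ω x - a))) P := (integrable_const _).sub (hgi x)
    have j2 : Integrable (fun ω => 1 - h (a * (Z ω x - a)) - h (a * (Z ω y - a))) P :=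
      j1.sub (hgi y)
    rw [integral_add j2 (hggi x y), integral_sub j1 (hgi y),
      integral_sub (integrable_const _) (hgi x), hgx, hgx]
    simp
    ring
  have hF0 : 0 ≤ p * (q - p) := mul_nonneg hp0 (sub_nonneg.2 hpq)
  have hE1 : 0 < E1 := Real.exp_pos _
  have hE2 : 0 < E2 := Real.exp_pos _
  have hnew := newman_inequality hassoc Y hYm
    (fun x z z' hz => Real.exp_le_exp.2 (neg_le_neg (hφ
      (mul_le_mul_of_nonneg_left (sub_le_sub_right (hz x) _) ha.le))))
    (fun x z => (Real.exp_pos _).le) (fun x z => Real.exp_le_one_iff.2 (by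
      simpa using hφ0 (a * (z x - a))))
    (fun x y => (if T.dist x y ≤ L then E1 else 0) + (p * (q - p) + E2)) (by
      intro x y hxy
      rw [hYY]
      have hW := hZ.comp ![x, y]
      have hd : 1 ≤ T.dist x y := hT.connected.pos_dist_of_ne hxy
      split_ifs with hdist
      · have hd1 : ρ ^ T.dist x y ≤ 1 / 2 :=
          (pow_le_of_le_one hρ0 (by linarith) (by omega)).trans hρ2
        have := near_pair hW (ρ := ρ ^ T.dist x y) (by simp) (by simp) (by simp)
          (by simp [SimpleGraph.dist_comm]) hd1 h0 h1 hhK ha (by linarith)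
        simp only [Matrix.cons_val_zero, Matrix.cons_val_one] at this
        nlinarith [sq_nonneg p]
      · have hd1 : ρ ^ T.dist x y ≤ (1 / 2) ^ L :=
          (pow_le_pow_of_le_one hρ0 (by linarith) (by omega)).trans
            (pow_le_pow_left₀ hρ0 hρ2 L)
        have hd2 : ((1 : ℝ) / 2) ^ L ≤ 1 / 4 :=
          (pow_le_pow_of_le_one (by norm_num) (by norm_num) hL).trans (by norm_num)
        have := far_pair hW (ρ := ρ ^ T.dist x y) (δ := δ) (by simp) (by simp) (by simp)
          (by simp [SimpleGraph.dist_comm]) (pow_nonneg hρ0 _) (hd1.trans hd2) hmono h0 h1 hhK ha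
          hKa (mul_le_mul_of_nonneg_left hd1 (by positivity))
        simp only [Matrix.cons_val_zero, Matrix.cons_val_one] at this
        rw [← hp, ← hq] at this
        linarith)
    (fun x y => by split_ifs <;> positivity) Finset.univ
  simp only [hYx, Finset.prod_const, Finset.card_univ] at hnew
  have hlhs : ∫ z, ∏ x, Y x z ∂(P.map Z) = ∫ ω, Real.exp (-∑ x, φ (a * (Z ω x - a))) ∂P := by
    rw [integral_map (f := fun z => ∏ x, Y x z) hZm.aemeasurable
      (Finset.measurable_fun_prod _ fun x _ => hYm x).aestronglyMeasurable]
    simp only [hY, ← Real.exp_sum, Finset.sum_neg_distrib]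
  rw [hlhs] at hnew
  refine hnew.trans ?_
  have hrow : ∀ x : V, ∑ y, ((if T.dist x y ≤ L then E1 else 0) + (p * (q - p) + E2)) ≤
      (r + 1 : ℝ) ^ L * E1 + Fintype.card V * (p * (q - p) + E2) := by
    intro x
    rw [Finset.sum_add_distrib, ← Finset.sum_filter]
    simp only [Finset.sum_const, Finset.card_univ, nsmul_eq_mul]
    gcongr
    exact_mod_cast card_ball_le T hT.connected r hdeg x L
  refine (Finset.sum_le_sum fun x _ => hrow x).trans (le_of_eq ?_)
  simp only [Finset.sum_const, Finset.card_univ, nsmul_eq_mul]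
  ring

/-- The distance `⌊log N / (8 log (r + 1))⌋` separating near from far pairs: it tends to infinity
while `(r + 1) ^ splitRadius r N ≤ N ^ (1 / 8)`. -/
noncomputable def splitRadius (r N : ℕ) : ℕ := ⌊Real.log N / (8 * Real.log (r + 1))⌋₊

lemma tendsto_splitRadius {r : ℕ} (hr : 3 ≤ r) : Tendsto (splitRadius r) atTop atTop := by
  have : 0 < Real.log (r + 1) := Real.log_pos (by
    have : (3 : ℝ) ≤ r := by exact_mod_cast hr
    linarith)
  exact tendsto_nat_floor_atTop.comp (tendsto_log_natCast.atTop_div_const (by positivity))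

/-- As `a_N² ∼ 2 log N`, any constants around `2` work; `15/8` is chosen so that
`(2/3) * (15/8) = 5/4 = 1 + 1/8 + 1/8`, which is what `tendsto_near_error` uses. -/
lemma eventually_aSeq_sq : ∀ᶠ N : ℕ in atTop, 15 / 8 * Real.log N ≤ aSeq (N : ℝ) ^ 2 ∧
    aSeq (N : ℝ) ^ 2 ≤ 3 * Real.log N := by
  filter_upwards [tendsto_aSeq_sq_div.eventually (lt_mem_nhds (show (15 / 8 : ℝ) < 2 by norm_num)),
    tendsto_aSeq_sq_div.eventually (gt_mem_nhds (show (2 : ℝ) < 3 by norm_num)),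
    tendsto_log_natCast.eventually_gt_atTop 0] with N h1 h2 h3
  rw [lt_div_iff₀ h3] at h1
  rw [div_lt_iff₀ h3] at h2
  exact ⟨h1.le, h2.le⟩

lemma tendsto_shift {r : ℕ} (hr : 3 ≤ r) : Tendsto (fun N : ℕ =>
    2 * aSeq (N : ℝ) ^ 2 * (1 / 2) ^ splitRadius r N) atTop (nhds 0) := by
  have hlog : 0 < Real.log (r + 1) := Real.log_pos (by
    have : (3 : ℝ) ≤ r := by exact_mod_cast hr
    linarith)
  have hbase : Tendsto (fun n : ℕ => ((n : ℝ) + 1) * (1 / 2 : ℝ) ^ n) atTop (nhds 0) := by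
    have := (tendsto_self_mul_const_pow_of_lt_one (r := (1 / 2 : ℝ)) (by norm_num)
      (by norm_num)).add (tendsto_pow_atTop_nhds_zero_of_lt_one (r := (1 / 2 : ℝ)) (by norm_num)
      (by norm_num))
    rw [add_zero] at this
    exact this.congr fun n => by ring
  have hup := (hbase.comp (tendsto_splitRadius hr)).const_mul (6 * (8 * Real.log (r + 1)))
  rw [mul_zero] at hup
  refine squeeze_zero' (Eventually.of_forall fun N => by positivity) ?_ hup
  filter_upwards [eventually_aSeq_sq] with N hN
  have hfl := Nat.lt_floor_add_one (Real.log N / (8 * Real.log (r + 1)))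
  rw [div_lt_iff₀ (by positivity)] at hfl
  have h3 : 2 * aSeq (N : ℝ) ^ 2 ≤
      6 * (8 * Real.log (r + 1)) * ((splitRadius r N : ℝ) + 1) := by
    unfold splitRadius
    nlinarith [hN.2]
  calc _ ≤ 6 * (8 * Real.log (r + 1)) * ((splitRadius r N : ℝ) + 1) * (1 / 2) ^ splitRadius r N := by
        gcongr
    _ = _ := by simp only [Function.comp_apply]; ring

lemma tendsto_near_error {r : ℕ} (hr : 3 ≤ r) (K : ℝ) : Tendsto (fun N : ℕ => (N : ℝ) *
    ((r + 1 : ℝ) ^ splitRadius r N * Real.exp (-(2 / 3) * (aSeq (N : ℝ) - K / aSeq (N : ℝ)) ^ 2)))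
    atTop (nhds 0) := by
  have hlog : 0 < Real.log (r + 1) := Real.log_pos (by
    have : (3 : ℝ) ≤ r := by exact_mod_cast hr
    linarith)
  have hup : Tendsto (fun N : ℕ => Real.exp (4 / 3 * K + -(Real.log N / 8))) atTop (nhds 0) := by
    refine Real.tendsto_exp_atBot.comp (tendsto_atBot_add_const_left _ _ ?_)
    exact tendsto_neg_atTop_atBot.comp (tendsto_log_natCast.atTop_div_const (by norm_num))
  refine squeeze_zero' (Eventually.of_forall fun N => by positivity) ?_ hup
  filter_upwards [eventually_aSeq_sq, tendsto_aSeq.eventually_gt_atTop 0, eventually_gt_atTop 0,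
    tendsto_log_natCast.eventually_gt_atTop 0]
    with N hN ha hN0 hlN
  have hN0' : (0 : ℝ) < N := by exact_mod_cast hN0
  have hpow : (r + 1 : ℝ) ^ splitRadius r N ≤ Real.exp (Real.log N / 8) := by
    rw [← Real.exp_log (show (0 : ℝ) < r + 1 by positivity), ← Real.exp_nat_mul]
    refine Real.exp_le_exp.2 ?_
    have := Nat.floor_le (show 0 ≤ Real.log N / (8 * Real.log (r + 1)) by positivity)
    rw [le_div_iff₀ (by positivity)] at this
    unfold splitRadius
    linarith
  have hsq : aSeq (N : ℝ) ^ 2 - 2 * K ≤ (aSeq (N : ℝ) - K / aSeq (N : ℝ)) ^ 2 := by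
    have : (aSeq (N : ℝ) - K / aSeq (N : ℝ)) ^ 2
        = aSeq (N : ℝ) ^ 2 - 2 * K + (K / aSeq (N : ℝ)) ^ 2 := by
      field_simp
      ring
    rw [this]
    linarith [sq_nonneg (K / aSeq (N : ℝ))]
  calc _ ≤ Real.exp (Real.log N) * (Real.exp (Real.log N / 8) *
        Real.exp (-(2 / 3) * (aSeq (N : ℝ) - K / aSeq (N : ℝ)) ^ 2)) := by
        rw [Real.exp_log hN0']
        gcongr
    _ ≤ _ := by
        rw [← Real.exp_add, ← Real.exp_add]
        refine Real.exp_le_exp.2 ?_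
        linarith [hN.1]

lemma tendsto_tail_error : Tendsto (fun N : ℕ => (N : ℝ) * ((N : ℝ) *
    Real.exp (-2 * aSeq (N : ℝ) ^ 2))) atTop (nhds 0) := by
  have hup : Tendsto (fun N : ℕ => Real.exp (-Real.log N)) atTop (nhds 0) :=
    Real.tendsto_exp_atBot.comp (tendsto_neg_atTop_atBot.comp tendsto_log_natCast)
  refine squeeze_zero' (Eventually.of_forall fun N => by positivity) ?_ hup
  filter_upwards [eventually_aSeq_sq, eventually_gt_atTop 0,
    tendsto_log_natCast.eventually_gt_atTop 0] with N hN hN0 hlN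
  have hN0' : (0 : ℝ) < N := by exact_mod_cast hN0
  conv_lhs => rw [← Real.exp_log hN0', ← Real.exp_add, ← Real.exp_add]
  refine Real.exp_le_exp.2 ?_
  rw [Real.exp_log hN0']
  linarith [hN.1]

/-! ### The Laplace functional in the limit -/

/-- Laplace-functional convergence for the Gaussian free field on regular trees: if for each
`N ≥ 2` the graph `T_N` is a tree on `N` vertices of maximal degree at most `r ≥ 3`, and
`Z^N` is a centered Gaussian vector with unit variances and covariances
`E[Z_x Z_y] = (r−1)^{−d(x,y)}`, then for every `φ ∈ C^∞_⌁`, with `a_N, b_N = 1/a_N`,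
`E[exp(−∑_x φ((Z_x − a_N)/b_N))] → exp(−∫(1 − e^{−φ(y)}) e^{−y} dy)`,
the Laplace functional of a Poisson point process with intensity `e^{−y} dy`. -/
theorem stmt_17 (r : ℕ) (hr : 3 ≤ r)
    (V : ℕ → Type*) [∀ N, Fintype (V N)] [∀ N, DecidableEq (V N)]
    (T : ∀ N, SimpleGraph (V N)) [∀ N, DecidableRel (T N).Adj]
    (hcard : ∀ N, 2 ≤ N → Fintype.card (V N) = N)
    (htree : ∀ N, 2 ≤ N → (T N).IsTree)
    (hdeg : ∀ N, 2 ≤ N → ∀ v, (T N).degree v ≤ r)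
    (Ω : ℕ → Type*) (mΩ : ∀ N, MeasurableSpace (Ω N))
    (P : ∀ N, Measure (Ω N)) (hP : ∀ N, IsProbabilityMeasure (P N))
    (Z : ∀ N, Ω N → V N → ℝ)
    (hGauss : ∀ N, 2 ≤ N →
      IsCenteredGaussianVector (P N) (Z N)
        (fun x y => (((r : ℝ) - 1) ^ (T N).dist x y)⁻¹))
    (φ : ℝ → ℝ) (hφ : CZigzag φ) :
    Tendsto
      (fun N =>
        ∫ ω, Real.exp (-∑ x, φ ((Z N ω x - aSeq N) / (aSeq N)⁻¹)) ∂P N)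
      atTop
      (nhds (Real.exp (-∫ y : ℝ, (1 - Real.exp (-φ y)) * Real.exp (-y)))) := by
  obtain ⟨hsmooth, hmono, K, hK0, hK, -⟩ := hφ
  have hφ0 : ∀ y, 0 ≤ φ y := fun y => by
    rw [← hK (min y (-K)) (min_le_right _ _)]
    exact hmono (min_le_left _ _)
  have hcont : Continuous fun y => 1 - Real.exp (-φ y) := by
    have := hsmooth.continuous
    fun_prop
  have hb : ∀ y, |1 - Real.exp (-φ y)| ≤ 1 := fun y => abs_le.2
    ⟨by linarith [Real.exp_le_one_iff.2 (neg_nonpos.2 (hφ0 y))], by linarith [Real.exp_pos (-φ y)]⟩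
  have hhK : ∀ y ≤ -K, 1 - Real.exp (-φ y) = 0 := fun y hy => by simp [hK y hy]
  set lam := ∫ y : ℝ, (1 - Real.exp (-φ y)) * Real.exp (-y) with hlam
  set p : ℕ → ℝ := fun N =>
    ∫ z, (1 - Real.exp (-φ (aSeq (N : ℝ) * (z - aSeq (N : ℝ))))) ∂gaussianReal 0 1 with hp
  set q : ℕ → ℝ := fun N => ∫ z, (1 - Real.exp (-φ (aSeq (N : ℝ) * (z - aSeq (N : ℝ)) +
    2 * aSeq (N : ℝ) ^ 2 * (1 / 2) ^ splitRadius r N))) ∂gaussianReal 0 1 with hq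
  have hNp : Tendsto (fun N : ℕ => (N : ℝ) * p N) atTop (nhds lam) := by
    simpa using tendsto_intensity _ hcont hb hhK (fun _ => 0) tendsto_const_nhds
  have hNq : Tendsto (fun N : ℕ => (N : ℝ) * q N) atTop (nhds lam) :=
    tendsto_intensity _ hcont hb hhK _ (tendsto_shift hr)
  have hpow : Tendsto (fun N : ℕ => (1 - p N) ^ N) atTop (nhds (Real.exp (-lam))) := by
    have := Real.tendsto_one_add_pow_exp_of_tendsto (g := fun N => -p N) (t := -lam)
      (by simpa using hNp.neg)
    simpa [sub_eq_add_neg] using this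
  have herr : Tendsto (fun N : ℕ => (N : ℝ) * ((r + 1 : ℝ) ^ splitRadius r N *
      Real.exp (-(2 / 3) * (aSeq (N : ℝ) - K / aSeq (N : ℝ)) ^ 2)) +
      N * (N * (p N * (q N - p N) + Real.exp (-2 * aSeq (N : ℝ) ^ 2)))) atTop (nhds 0) := by
    have := (tendsto_near_error hr K).add ((hNp.mul (hNq.sub hNp)).add tendsto_tail_error)
    simp only [sub_self, mul_zero, add_zero] at this
    exact this.congr fun N => by ring
  have hdiff : Tendsto (fun N : ℕ =>
      ∫ ω, Real.exp (-∑ x, φ ((Z N ω x - aSeq N) / (aSeq N)⁻¹)) ∂P N - (1 - p N) ^ N)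
      atTop (nhds 0) := by
    refine squeeze_zero_norm' ?_ herr
    filter_upwards [eventually_ge_atTop 2, tendsto_aSeq.eventually_gt_atTop 0,
      ((tendsto_pow_atTop two_ne_zero).comp tendsto_aSeq).eventually_ge_atTop (2 * K),
      (tendsto_splitRadius hr).eventually_ge_atTop 2] with N hN ha hKa hL
    have := hP N
    have key := laplace_compare (htree N hN) hr (hdeg N hN) (hGauss N hN) hmono hφ0 hK0.le hK ha
      hKa hL (p := p N) (q := q N) rfl rfl
    rw [hcard N hN] at key
    simpa only [Real.norm_eq_abs, div_inv_eq_mul, mul_comm (_ - aSeq (N : ℝ))] using key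
  have := hdiff.add hpow
  simpa using this
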